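/- arXiv:1909.13348 — 2 statements merged into one kernel-verified Lean document; each statement's English description precedes it below -/
import Mathlib

section
/- Let X be a word with prefix state p and with d_X dominant loop blocks in its prefix decomposition, and let Y be a word with suffix state s and d_Y dominant loop blocks in its suffix decomposition. Suppose that p and s are compatible, that d_X + d_Y = D + 1, that L_p = coL_s, and that the state p (and therefore also s) is dominant. Then the two states p and s match. -/
open Filter Asymptotics
open scoped Classical

/-- An embedding order on words over a weighted alphabet. -/
structure EmbeddingOrder (A : Type*) (w : A → ℕ) where
  le : List A → List A → Prop
  le_refl : ∀ W, le W W
  le_trans : ∀ {U V W}, le U V → le V W → le U W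
  le_antisymm : ∀ {V W}, le V W → le W V → V = W
  nil_le : ∀ W, le [] W
  weight_lt : ∀ {W V}, le W V → W ≠ V → (W.map w).sum < (V.map w).sum
  le_iff_factor : ∀ W V, le W V ↔ ∃ Ws : List (List A),
    Ws.length = V.length ∧ Ws.flatten = W ∧ ∀ q ∈ Ws.zip V, le q.1 [q.2]

namespace EmbeddingOrder

variable {A : Type*} {w : A → ℕ} (E : EmbeddingOrder A w) {f : ℕ} (φ : Fin f → List A)

/-- The weight of a word: the sum of the weights of its letters. -/
def wt (w : A → ℕ) (W : List A) : ℕ := (W.map w).sum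

/-- The class `C = A* ∩ Av(φ¹,…,φ^f)` of all words avoiding every forbidden word. -/
def Cset : Set (List A) := {W | ∀ i, ¬ E.le (φ i) W}

/-- The prefix state of `W`: its `i`-th component is the length of the longest prefix
of the forbidden word `φ i` contained in `W`. -/
noncomputable def pstate (W : List A) : Fin f → ℕ := fun i =>
  sSup {p | p ≤ (φ i).length ∧ E.le ((φ i).take p) W}

/-- The suffix state of `W`: its `i`-th component is the length of the longest suffix
of the forbidden word `φ i` contained in `W`. -/
noncomputable def sstate (W : List A) : Fin f → ℕ := fun i =>
  sSup {p | p ≤ (φ i).length ∧ E.le ((φ i).drop ((φ i).length - p)) W}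

/-- A prefix state `p` and a suffix state `s` *overlap* if `p i + s i ≥ ℓ_i` for some
`i` (equivalently, `XY ∉ C` whenever `X` has prefix state `p` and `Y` suffix state `s`);
otherwise they are *compatible*. -/
def POverlap (p s : Fin f → ℕ) : Prop := ∃ i, (φ i).length ≤ p i + s i

/-- The (prefix) loop alphabet of a state `p`: the letters whose appending does not
change the prefix state `p`. -/
def stateLoopP (p : Fin f → ℕ) : Set A :=
  {a | ∀ X : List A, E.pstate φ X = p → E.pstate φ (X ++ [a]) = p}

/-- The suffix loop alphabet of a state `s`: the letters whose prepending does not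
change the suffix state `s`. -/
def stateLoopS (s : Fin f → ℕ) : Set A :=
  {a | ∀ Y : List A, E.sstate φ Y = s → E.sstate φ (a :: Y) = s}

/-- `p'` is a *prefix successor* of `p`: `p' ≠ p` and some letter is a transition
symbol from `p` to `p'`. -/
def PSucc (p p' : Fin f → ℕ) : Prop :=
  p ≠ p' ∧ ∃ b : A, ∀ X : List A, E.pstate φ X = p → E.pstate φ (X ++ [b]) = p'

/-- `s'` is a *suffix successor* of `s`. -/
def SSucc (s s' : Fin f → ℕ) : Prop :=
  s ≠ s' ∧ ∃ b : A, ∀ Y : List A, E.sstate φ Y = s → E.sstate φ (b :: Y) = s'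

/-- Compatible states `p` (prefix) and `s` (suffix) *match* if every prefix successor
of `p` overlaps with `s` and every suffix successor of `s` overlaps with `p`. -/
def Matches (p s : Fin f → ℕ) : Prop :=
  ¬ POverlap φ p s ∧ (∀ p', E.PSucc φ p p' → POverlap φ p' s) ∧
    ∀ s', E.SSucc φ s s' → POverlap φ p s'

/-- `ρ(S)`: the unique positive root of `1 − Σ_{a∈S} x^{weight a}` for a nonempty set
`S` of letters (realised as a supremum). -/
noncomputable def rhoOf (w : A → ℕ) (S : Set A) : ℝ :=
  sSup {x : ℝ | 0 ≤ x ∧ ∑' a : S, x ^ w (a : A) ≤ 1}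

/-- The growth rate of `S*`: the reciprocal `ρ(S)⁻¹` of the positive root of
`1 − Σ_{a∈S} x^{weight a}`. -/
noncomputable def growthOf (w : A → ℕ) (S : Set A) : ℝ := (rhoOf w S)⁻¹

/-- The dominant growth rate `γ` of the class: the largest growth rate of the loop
alphabet of a (reachable) prefix state. -/
noncomputable def gammaC : ℝ :=
  sSup {g : ℝ | ∃ X ∈ E.Cset φ, g = growthOf w (E.stateLoopP φ (E.pstate φ X))}

/-- The number of dominant loop blocks (equivalently, dominant states) in the prefix
decomposition of `W`. -/
noncomputable def domCountP (W : List A) : ℕ :=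
  Set.ncard {p : Fin f → ℕ | (∃ j ≤ W.length, E.pstate φ (W.take j) = p) ∧
    growthOf w (E.stateLoopP φ p) = E.gammaC φ}

/-- The number of dominant loop blocks (equivalently, dominant states) in the suffix
decomposition of `W`. -/
noncomputable def domCountS (W : List A) : ℕ :=
  Set.ncard {s : Fin f → ℕ | (∃ j ≤ W.length, E.sstate φ (W.drop j) = s) ∧
    growthOf w (E.stateLoopS φ s) = E.gammaC φ}

/-- `D`: the largest number of dominant states appearing on a single prefix transition
path of a word of the class. -/
noncomputable def Dmax : ℕ := sSup {d : ℕ | ∃ W ∈ E.Cset φ, E.domCountP φ W = d}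

end EmbeddingOrder

open EmbeddingOrder

namespace EmbeddingOrder

variable {A : Type*} {w : A → ℕ} (E : EmbeddingOrder A w) {f : ℕ} (φ : Fin f → List A)

theorem le_append_iff (W V1 V2 : List A) :
    E.le W (V1 ++ V2) ↔ ∃ W1 W2, W = W1 ++ W2 ∧ E.le W1 V1 ∧ E.le W2 V2 := by
  constructor
  · intro h
    obtain ⟨Ws, hl, hf, hz⟩ := (E.le_iff_factor _ _).1 h
    have hlen : (Ws.take V1.length).length = V1.length := by
      simp at hl ⊢; omega
    have hsplit : Ws.zip (V1 ++ V2)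
        = (Ws.take V1.length).zip V1 ++ (Ws.drop V1.length).zip V2 := by
      rw [← List.zip_append hlen, List.take_append_drop]
    refine ⟨(Ws.take V1.length).flatten, (Ws.drop V1.length).flatten, ?_, ?_, ?_⟩
    · rw [← List.flatten_append, List.take_append_drop, hf]
    · refine (E.le_iff_factor _ _).2 ⟨_, hlen, rfl, ?_⟩
      intro q hq
      exact hz q (by rw [hsplit]; exact List.mem_append_left _ hq)
    · refine (E.le_iff_factor _ _).2 ⟨_, ?_, rfl, ?_⟩
      · simp at hl ⊢; omega
      · intro q hq
        exact hz q (by rw [hsplit]; exact List.mem_append_right _ hq)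
  · rintro ⟨W1, W2, rfl, h1, h2⟩
    obtain ⟨Ws, hl, hf, hz⟩ := (E.le_iff_factor _ _).1 h1
    obtain ⟨Ws', hl', hf', hz'⟩ := (E.le_iff_factor _ _).1 h2
    refine (E.le_iff_factor _ _).2 ⟨Ws ++ Ws', by simp [hl, hl'], by simp [hf, hf'], ?_⟩
    intro q hq
    rw [List.zip_append hl] at hq
    rcases List.mem_append.1 hq with h | h
    · exact hz q h
    · exact hz' q h

theorem le_append_left (U V : List A) : E.le U (U ++ V) :=
  (E.le_append_iff _ _ _).2 ⟨U, [], by simp, E.le_refl _, E.nil_le _⟩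

theorem le_append_right (U V : List A) : E.le V (U ++ V) :=
  (E.le_append_iff _ _ _).2 ⟨[], V, by simp, E.nil_le _, E.le_refl _⟩

theorem take_le_take (W : List A) {k m : ℕ} (h : k ≤ m) : E.le (W.take k) (W.take m) := by
  obtain ⟨t, ht⟩ := List.take_prefix_take_left (l := W) h
  rw [← ht]; exact E.le_append_left _ _

theorem drop_le_drop (W : List A) {k m : ℕ} (h : k ≤ m) : E.le (W.drop m) (W.drop k) := by
  obtain ⟨t, ht⟩ := List.drop_suffix_drop_left W h
  rw [← ht]; exact E.le_append_right _ _

theorem pstate_le (W : List A) (i : Fin f) : E.pstate φ W i ≤ (φ i).length :=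
  csSup_le' (fun _ h => h.1)

theorem sstate_le (W : List A) (i : Fin f) : E.sstate φ W i ≤ (φ i).length :=
  csSup_le' (fun _ h => h.1)

theorem take_le_iff (W : List A) (i : Fin f) (k : ℕ) (hk : k ≤ (φ i).length) :
    E.le ((φ i).take k) W ↔ k ≤ E.pstate φ W i := by
  have hb : BddAbove {p | p ≤ (φ i).length ∧ E.le ((φ i).take p) W} := ⟨_, fun _ h => h.1⟩
  constructor
  · intro h; exact le_csSup hb ⟨hk, h⟩
  · intro h
    have := Nat.sSup_mem (s := {p | p ≤ (φ i).length ∧ E.le ((φ i).take p) W})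
      ⟨0, by simp, by simpa using E.nil_le W⟩ hb
    exact E.le_trans (E.take_le_take _ h) this.2

theorem drop_le_iff (W : List A) (i : Fin f) (k : ℕ) (hk : k ≤ (φ i).length) :
    E.le ((φ i).drop ((φ i).length - k)) W ↔ k ≤ E.sstate φ W i := by
  have hb : BddAbove {p | p ≤ (φ i).length ∧ E.le ((φ i).drop ((φ i).length - p)) W} :=
    ⟨_, fun _ h => h.1⟩
  constructor
  · intro h; exact le_csSup hb ⟨hk, h⟩
  · intro h
    have := Nat.sSup_mem
      (s := {p | p ≤ (φ i).length ∧ E.le ((φ i).drop ((φ i).length - p)) W})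
      ⟨0, by simp, by simpa using E.nil_le W⟩ hb
    exact E.le_trans (E.drop_le_drop _ (Nat.sub_le_sub_left h _)) this.2

theorem drop_le_iff' (W : List A) (i : Fin f) (k : ℕ) (hk : k ≤ (φ i).length) :
    E.le ((φ i).drop k) W ↔ (φ i).length - k ≤ E.sstate φ W i := by
  rw [← E.drop_le_iff φ W i _ (Nat.sub_le _ _), Nat.sub_sub_self hk]

theorem eq_append_iff (W W1 W2 : List A) :
    W = W1 ++ W2 ↔ ∃ m ≤ W.length, W1 = W.take m ∧ W2 = W.drop m := by
  constructor
  · rintro rfl; exact ⟨W1.length, by simp, by simp, by simp⟩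
  · rintro ⟨m, _, rfl, rfl⟩; simp

theorem le_append_iff' (W V1 V2 : List A) :
    E.le W (V1 ++ V2) ↔ ∃ m ≤ W.length, E.le (W.take m) V1 ∧ E.le (W.drop m) V2 := by
  rw [le_append_iff]
  constructor
  · rintro ⟨W1, W2, h, h1, h2⟩
    obtain ⟨m, hm, rfl, rfl⟩ := (eq_append_iff _ _ _).1 h
    exact ⟨m, hm, h1, h2⟩
  · rintro ⟨m, hm, h1, h2⟩
    exact ⟨_, _, by simp, h1, h2⟩

theorem take_le_append_iff (W U : List A) (i : Fin f) (k : ℕ) (hk : k ≤ (φ i).length) :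
    E.le ((φ i).take k) (W ++ U) ↔
      ∃ m ≤ k, m ≤ E.pstate φ W i ∧ E.le (((φ i).take k).drop m) U := by
  rw [le_append_iff']
  simp only [List.length_take, min_eq_left hk]
  refine exists_congr fun m => and_congr_right fun hm => ?_
  rw [List.take_take, min_eq_left hm, E.take_le_iff φ W i m (hm.trans hk)]

theorem drop_le_append_iff (W U : List A) (i : Fin f) (k : ℕ) (hk : k ≤ (φ i).length) :
    E.le ((φ i).drop k) (U ++ W) ↔
      ∃ m ≤ (φ i).length - k, E.le (((φ i).drop k).take m) U ∧
        (φ i).length - (k + m) ≤ E.sstate φ W i := by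
  rw [le_append_iff']
  simp only [List.length_drop]
  refine exists_congr fun m => and_congr_right fun hm => ?_
  rw [List.drop_drop, E.drop_le_iff' φ W i _ (by omega)]

theorem pstate_congr {W W' : List A} (h : E.pstate φ W = E.pstate φ W') (U : List A) :
    E.pstate φ (W ++ U) = E.pstate φ (W' ++ U) := by
  funext i
  have key : ∀ k ≤ (φ i).length,
      (k ≤ E.pstate φ (W ++ U) i ↔ k ≤ E.pstate φ (W' ++ U) i) := by
    intro k hk
    rw [← E.take_le_iff φ _ i k hk, ← E.take_le_iff φ _ i k hk,
      E.take_le_append_iff φ _ _ i k hk, E.take_le_append_iff φ _ _ i k hk, h]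
  exact _root_.le_antisymm ((key _ (E.pstate_le φ _ i)).1 le_rfl)
    ((key _ (E.pstate_le φ _ i)).2 le_rfl)

theorem sstate_congr {W W' : List A} (h : E.sstate φ W = E.sstate φ W') (U : List A) :
    E.sstate φ (U ++ W) = E.sstate φ (U ++ W') := by
  funext i
  have key : ∀ k ≤ (φ i).length,
      (k ≤ E.sstate φ (U ++ W) i ↔ k ≤ E.sstate φ (U ++ W') i) := by
    intro k hk
    rw [← E.drop_le_iff φ _ i k hk, ← E.drop_le_iff φ _ i k hk,
      E.drop_le_append_iff φ _ _ i _ (Nat.sub_le _ _),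
      E.drop_le_append_iff φ _ _ i _ (Nat.sub_le _ _), h]
  exact _root_.le_antisymm ((key _ (E.sstate_le φ _ i)).1 le_rfl)
    ((key _ (E.sstate_le φ _ i)).2 le_rfl)

theorem pstate_mono (W U : List A) : E.pstate φ W ≤ E.pstate φ (W ++ U) := by
  intro i
  rw [← E.take_le_iff φ _ i _ (E.pstate_le φ _ i)]
  exact E.le_trans ((E.take_le_iff φ _ i _ (E.pstate_le φ _ i)).2 le_rfl) (E.le_append_left _ _)

theorem append_mem_iff (W V : List A) :
    W ++ V ∈ E.Cset φ ↔ ¬ POverlap φ (E.pstate φ W) (E.sstate φ V) := by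
  unfold Cset POverlap
  simp only [Set.mem_setOf_eq, not_exists]
  refine forall_congr' fun i => not_congr ?_
  rw [le_append_iff']
  constructor
  · rintro ⟨m, hm, h1, h2⟩
    rw [E.take_le_iff φ _ i m hm] at h1
    rw [E.drop_le_iff' φ _ i m hm] at h2
    omega
  · intro h
    refine ⟨_, E.pstate_le φ W i, (E.take_le_iff φ _ i _ (E.pstate_le φ _ i)).2 le_rfl, ?_⟩
    rw [E.drop_le_iff' φ _ i _ (E.pstate_le φ _ i)]
    omega

theorem mem_of_append {W V : List A} (h : W ++ V ∈ E.Cset φ) : W ∈ E.Cset φ :=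
  fun i hi => h i (E.le_trans hi (E.le_append_left _ _))

theorem mem_loopP_iff (W : List A) (a : A) :
    a ∈ E.stateLoopP φ (E.pstate φ W) ↔ E.pstate φ (W ++ [a]) = E.pstate φ W :=
  ⟨fun h => h W rfl, fun h _ hV => (E.pstate_congr φ hV [a]).trans h⟩

theorem mem_loopS_iff (W : List A) (a : A) :
    a ∈ E.stateLoopS φ (E.sstate φ W) ↔ E.sstate φ (a :: W) = E.sstate φ W :=
  ⟨fun h => h W rfl, fun h _ hV => (E.sstate_congr φ hV [a]).trans h⟩

theorem pump (L : Set A) (n : ℕ) : ∀ U : List A,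
    (∑ i, (φ i).length) - (∑ i, E.pstate φ U i) = n →
    ∃ v : List A, (∀ a ∈ v, a ∈ L) ∧ L ⊆ E.stateLoopP φ (E.pstate φ (U ++ v)) := by
  induction n using Nat.strong_induction_on with
  | _ n ih =>
    intro U hU
    by_cases h : L ⊆ E.stateLoopP φ (E.pstate φ U)
    · exact ⟨[], by simp, by simpa using h⟩
    · obtain ⟨a, ha, hna⟩ := Set.not_subset.1 h
      rw [mem_loopP_iff] at hna
      have hlt : E.pstate φ U < E.pstate φ (U ++ [a]) :=
        lt_of_le_of_ne (E.pstate_mono φ U [a]) (Ne.symm hna)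
      have hs : ∑ i, E.pstate φ U i < ∑ i, E.pstate φ (U ++ [a]) i := by
        obtain ⟨hle, i, hi⟩ := Pi.lt_def.1 hlt
        exact Finset.sum_lt_sum (fun i _ => hle i) ⟨i, Finset.mem_univ _, hi⟩
      have hb : ∑ i, E.pstate φ (U ++ [a]) i ≤ ∑ i, (φ i).length :=
        Finset.sum_le_sum fun i _ => E.pstate_le φ _ i
      obtain ⟨v, hv, hv'⟩ := ih _ (by omega) (U ++ [a]) rfl
      refine ⟨a :: v, ?_, by simpa using hv'⟩
      intro c hc
      rcases List.mem_cons.1 hc with rfl | hc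
      · exact ha
      · exact hv c hc

theorem sstate_loops (Y v : List A) (hv : ∀ a ∈ v, a ∈ E.stateLoopS φ (E.sstate φ Y)) :
    E.sstate φ (v ++ Y) = E.sstate φ Y := by
  induction v with
  | nil => rfl
  | cons a v ih =>
    have h1 := ih fun c hc => hv c (List.mem_cons_of_mem _ hc)
    have h2 := hv a List.mem_cons_self
    exact h2 (v ++ Y) h1

/-! Growth rates. -/

theorem growth_strict [Fintype A] (hw : ∀ a, 0 < w a) {S T : Set A} (h : S ⊂ T) :
    growthOf w S < growthOf w T := by
  obtain ⟨hST, c, hcT, hcS⟩ := Set.ssubset_iff_of_subset h.1 |>.1 h |> fun ⟨c, a, b⟩ =>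
    (⟨h.1, c, a, b⟩ : S ⊆ T ∧ ∃ c, c ∈ T ∧ c ∉ S)
  set F : Set A → ℝ → ℝ := fun R x => ∑ a ∈ R.toFinset, x ^ w a with hF
  have hts : ∀ (R : Set A) (x : ℝ), ∑' a : R, x ^ w (a : A) = F R x := by
    intro R x
    rw [tsum_fintype, hF]
    exact (Finset.sum_subtype R.toFinset (by simp) (fun a => x ^ w a)).symm
  have hrho : ∀ R : Set A, rhoOf w R = sSup {x : ℝ | 0 ≤ x ∧ F R x ≤ 1} := by
    intro R; unfold rhoOf; simp only [hts]
  have hcont : ∀ R, Continuous (F R) := by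
    intro R; simp only [hF]; fun_prop
  have hbdd : ∀ R : Set A, R.Nonempty → BddAbove {x : ℝ | 0 ≤ x ∧ F R x ≤ 1} := by
    rintro R ⟨a, ha⟩
    refine ⟨1, fun x hx => ?_⟩
    have h1 : x ^ w a ≤ F R x :=
      Finset.single_le_sum (f := fun a => x ^ w a) (fun b _ => pow_nonneg hx.1 _) (by simpa using ha)
    exact (pow_le_one_iff_of_nonneg hx.1 (hw a).ne').1 (h1.trans hx.2)
  have hpos : ∀ R : Set A, R.Nonempty → 0 < rhoOf w R := by
    rintro R hR
    have hev : ∀ᶠ x in nhds (0:ℝ), F R x < 1 := by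
      have h0 : F R 0 < 1 := by
        simp only [hF]
        rw [Finset.sum_eq_zero (fun a _ => zero_pow (hw a).ne')]; norm_num
      exact (hcont R).continuousAt.eventually_lt continuousAt_const h0
    obtain ⟨y, hy, hy0⟩ := ((hev.filter_mono nhdsWithin_le_nhds).and
      (self_mem_nhdsWithin : Set.Ioi (0:ℝ) ∈ nhdsWithin 0 (Set.Ioi 0))).exists
    rw [hrho]
    exact lt_of_lt_of_le hy0 (le_csSup (hbdd R hR) ⟨le_of_lt hy0, hy.le⟩)
  have hTne : T.Nonempty := ⟨c, hcT⟩
  have hTpos := hpos T hTne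
  unfold growthOf
  rcases S.eq_empty_or_nonempty with hS | hS
  · have : rhoOf w S = 0 := by
      rw [hrho]
      apply Real.sSup_of_not_bddAbove
      rintro ⟨M, hM⟩
      have := hM (a := |M| + 1) ⟨by positivity, by simp [hF, hS]⟩
      linarith [le_abs_self M]
    rw [this, inv_zero]
    exact inv_pos.2 hTpos
  · have hlt : rhoOf w T < rhoOf w S := by
      set r := rhoOf w T with hr
      have hmem : r ∈ {x : ℝ | 0 ≤ x ∧ F T x ≤ 1} := by
        rw [hr, hrho]
        refine IsClosed.csSup_mem ?_ ?_ (hbdd T hTne)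
        · exact (isClosed_le continuous_const continuous_id).inter
            (isClosed_le (hcont T) continuous_const)
        · refine ⟨0, le_rfl, ?_⟩
          simp only [hF]
          rw [Finset.sum_eq_zero (fun a _ => zero_pow (hw a).ne')]; norm_num
      have hFlt : F S r < 1 := by
        refine lt_of_lt_of_le ?_ hmem.2
        simp only [hF]
        refine Finset.sum_lt_sum_of_subset (i := c) ?_ (by simpa using hcT)
          (by simpa using hcS) (by positivity) (fun j _ _ => by positivity)
        simpa using hST
      have hev : ∀ᶠ x in nhds r, F S x < 1 :=
        (hcont S).continuousAt.eventually_lt continuousAt_const hFlt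
      obtain ⟨y, hy, hy0⟩ := ((hev.filter_mono nhdsWithin_le_nhds).and
        (self_mem_nhdsWithin : Set.Ioi r ∈ nhdsWithin r (Set.Ioi r))).exists
      have hy0' : r < y := hy0
      rw [hrho S]
      exact lt_of_lt_of_le hy0' (le_csSup (hbdd S hS) ⟨by linarith, hy.le⟩)
    exact inv_strictAnti₀ hTpos hlt

theorem growth_le_gamma [Fintype A] {W : List A} (hW : W ∈ E.Cset φ) :
    growthOf w (E.stateLoopP φ (E.pstate φ W)) ≤ E.gammaC φ := by
  refine le_csSup (Set.Finite.bddAbove ?_) ⟨W, hW, rfl⟩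
  refine (Set.finite_range (fun S : Set A => growthOf w S)).subset ?_
  rintro _ ⟨V, _, rfl⟩
  exact ⟨_, rfl⟩

theorem loop_eq [Fintype A] (hw : ∀ a, 0 < w a) {W : List A} (hW : W ∈ E.Cset φ) {L : Set A}
    (hL : L ⊆ E.stateLoopP φ (E.pstate φ W)) (hd : growthOf w L = E.gammaC φ) :
    E.stateLoopP φ (E.pstate φ W) = L := by
  by_contra hne
  have := growth_strict hw (lt_of_le_of_ne hL (Ne.symm hne))
  have := E.growth_le_gamma φ hW
  linarith

/-! The dominant sets. -/

/-- Dominant suffix states of `W`. -/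
def domS (W : List A) : Set (Fin f → ℕ) :=
  {s | (∃ j ≤ W.length, E.sstate φ (W.drop j) = s) ∧
    growthOf w (E.stateLoopS φ s) = E.gammaC φ}

/-- Dominant prefix states of `W`. -/
def domP (W : List A) : Set (Fin f → ℕ) :=
  {p | (∃ j ≤ W.length, E.pstate φ (W.take j) = p) ∧
    growthOf w (E.stateLoopP φ p) = E.gammaC φ}

theorem states_finite : {p : Fin f → ℕ | ∀ i, p i ≤ (φ i).length}.Finite :=
  (Set.finite_Iic (fun i => (φ i).length)).subset fun _ hp => hp

theorem domP_subset (W : List A) : E.domP φ W ⊆ {p | ∀ i, p i ≤ (φ i).length} := by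
  rintro _ ⟨⟨j, _, rfl⟩, _⟩ i
  exact E.pstate_le φ _ i

theorem domS_subset (W : List A) : E.domS φ W ⊆ {p | ∀ i, p i ≤ (φ i).length} := by
  rintro _ ⟨⟨j, _, rfl⟩, _⟩ i
  exact E.sstate_le φ _ i

theorem domS_cons (c : A) (Y : List A) :
    E.domS φ (c :: Y) ⊆ insert (E.sstate φ (c :: Y)) (E.domS φ Y) := by
  rintro _ ⟨⟨j, hj, rfl⟩, hd⟩
  cases j with
  | zero => left; rfl
  | succ j => right; exact ⟨⟨j, by simpa using hj, by simp⟩, by simpa using hd⟩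

theorem domCountP_le_Dmax {W : List A} (hW : W ∈ E.Cset φ) :
    E.domCountP φ W ≤ E.Dmax φ := by
  refine le_csSup ⟨Set.ncard {p : Fin f → ℕ | ∀ i, p i ≤ (φ i).length}, ?_⟩ ⟨W, hW, rfl⟩
  rintro _ ⟨V, _, rfl⟩
  exact Set.ncard_le_ncard (E.domP_subset φ V) (states_finite φ)

theorem pumped [Fintype A] (hw : ∀ a, 0 < w a) (Y : List A) : ∀ U : List A,
    U ++ Y ∈ E.Cset φ → ∃ Z : List A, E.sstate φ Z = E.sstate φ Y ∧
      ∃ T : Finset (Fin f → ℕ), E.domCountS φ Y ≤ T.card ∧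
        (∀ q ∈ T, ∃ Z1 Z2, Z = Z1 ++ Z2 ∧ E.pstate φ (U ++ Z1) = q) ∧
        (∀ q ∈ T, growthOf w (E.stateLoopP φ q) = E.gammaC φ) ∧
        (∀ q ∈ T, q = E.pstate φ U → E.stateLoopP φ q = E.stateLoopS φ (E.sstate φ Y)) := by
  have hcount : ∀ W, E.domCountS φ W = (E.domS φ W).ncard := fun _ => rfl
  have hfin : ∀ W, (E.domS φ W).Finite := fun W =>
    (states_finite φ).subset (E.domS_subset φ W)
  -- the pumping step at a dominant suffix state
  have step : ∀ U Y : List A, U ++ Y ∈ E.Cset φ →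
      growthOf w (E.stateLoopS φ (E.sstate φ Y)) = E.gammaC φ →
      ∃ v, E.sstate φ (v ++ Y) = E.sstate φ Y ∧ (U ++ v) ++ Y ∈ E.Cset φ ∧
        E.stateLoopP φ (E.pstate φ (U ++ v)) = E.stateLoopS φ (E.sstate φ Y) := by
    intro U Y hUY hd
    obtain ⟨v, hv, hsub⟩ := E.pump φ (E.stateLoopS φ (E.sstate φ Y)) _ U rfl
    have hs := E.sstate_loops φ Y v hv
    have hC : (U ++ v) ++ Y ∈ E.Cset φ := by
      rw [List.append_assoc, append_mem_iff, hs, ← append_mem_iff]; exact hUY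
    exact ⟨v, hs, hC, E.loop_eq φ hw (E.mem_of_append φ hC) hsub hd⟩
  induction Y with
  | nil =>
    intro U hU
    by_cases hd : growthOf w (E.stateLoopS φ (E.sstate φ [])) = E.gammaC φ
    · obtain ⟨v, hs, hC, hL⟩ := step U [] hU hd
      refine ⟨v, by simpa using hs, {E.pstate φ (U ++ v)}, ?_, ?_, ?_, ?_⟩
      · rw [hcount, Finset.card_singleton]
        refine (Set.ncard_le_ncard (t := {E.sstate φ []}) ?_).trans (by simp)
        rintro _ ⟨⟨j, _, rfl⟩, _⟩
        simp
      · intro q hq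
        rw [Finset.mem_singleton] at hq
        exact ⟨v, [], by simp, hq.symm⟩
      · intro q hq
        rw [Finset.mem_singleton] at hq
        rw [hq, hL, hd]
      · intro q hq _
        rw [Finset.mem_singleton] at hq
        rw [hq, hL]
    · refine ⟨[], rfl, ∅, ?_, by simp, by simp, by simp⟩
      rw [hcount]
      have : E.domS φ [] = ∅ := by
        ext s
        simp only [Set.mem_empty_iff_false, iff_false]
        rintro ⟨⟨j, _, rfl⟩, h⟩
        exact hd (by simpa using h)
      simp [this]
  | cons c Y ih =>
    intro U hU
    by_cases hst : E.sstate φ (c :: Y) = E.sstate φ Y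
    · have hU' : U ++ Y ∈ E.Cset φ := by
        rw [append_mem_iff, ← hst, ← append_mem_iff]; exact hU
      obtain ⟨Z, hZ, T, h1, h2, h3, h4⟩ := ih U hU'
      refine ⟨Z, hZ.trans hst.symm, T, _root_.le_trans ?_ h1, h2, h3, ?_⟩
      · rw [hcount, hcount]
        refine Set.ncard_le_ncard ?_ (hfin _)
        intro s hs
        rcases E.domS_cons φ c Y hs with rfl | h
        · exact ⟨⟨0, by simp, by simp [hst]⟩, hs.2⟩
        · exact h
      · rw [hst]; exact h4
    · have hc : c ∉ E.stateLoopS φ (E.sstate φ Y) := by rwa [mem_loopS_iff]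
      -- the key contradiction
      have key : ∀ (V : List A) (q : Fin f → ℕ), q = E.pstate φ V →
          E.pstate φ (V ++ [c]) ≤ q →
          (q = E.pstate φ (V ++ [c]) →
            E.stateLoopP φ q = E.stateLoopS φ (E.sstate φ Y)) → False := by
        rintro V q rfl hle h
        have he := _root_.le_antisymm (E.pstate_mono φ V [c]) hle
        apply hc
        rw [← h he, mem_loopP_iff]
        exact he.symm
      by_cases hd : growthOf w (E.stateLoopS φ (E.sstate φ (c :: Y))) = E.gammaC φ
      · obtain ⟨v, hs, hC, hL⟩ := step U (c :: Y) hU hd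
        obtain ⟨Z, hZ, T, h1, h2, h3, h4⟩ := ih (U ++ v ++ [c]) (by simpa using hC)
        have hge : ∀ q ∈ T, E.pstate φ (U ++ v ++ [c]) ≤ q := by
          intro q hq
          obtain ⟨Z1, Z2, _, rfl⟩ := h2 q hq
          exact E.pstate_mono φ _ _
        have hnot : E.pstate φ (U ++ v) ∉ T := fun hq =>
          key (U ++ v) _ rfl (hge _ hq) (h4 _ hq)
        refine ⟨v ++ [c] ++ Z, ?_, insert (E.pstate φ (U ++ v)) T, ?_, ?_, ?_, ?_⟩
        · rw [E.sstate_congr φ hZ, ← hs]; simp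
        · rw [Finset.card_insert_of_notMem hnot, hcount]
          refine (Set.ncard_le_ncard (E.domS_cons φ c Y) ((hfin Y).insert _)).trans ?_
          exact (Set.ncard_insert_le _ _).trans (Nat.succ_le_succ h1)
        · intro q hq
          rcases Finset.mem_insert.1 hq with rfl | hq
          · exact ⟨v, [c] ++ Z, by simp, rfl⟩
          · obtain ⟨Z1, Z2, rfl, h⟩ := h2 q hq
            exact ⟨v ++ [c] ++ Z1, Z2, by simp, by simpa using h⟩
        · intro q hq
          rcases Finset.mem_insert.1 hq with rfl | hq
          · rw [hL, hd]
          · exact h3 q hq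
        · intro q hq hqU
          rcases Finset.mem_insert.1 hq with rfl | hq
          · exact hL
          · exfalso
            have ha : q ≤ E.pstate φ (U ++ v) := hqU ▸ E.pstate_mono φ U v
            have hb := E.pstate_mono φ (U ++ v) [c]
            exact key (U ++ v) q (_root_.le_antisymm ha (hb.trans (hge q hq))) (hge q hq) (h4 q hq)
      · obtain ⟨Z, hZ, T, h1, h2, h3, h4⟩ := ih (U ++ [c]) (by simpa using hU)
        refine ⟨c :: Z, E.sstate_congr φ hZ [c], T, _root_.le_trans ?_ h1, ?_, h3, ?_⟩
        · rw [hcount, hcount]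
          refine Set.ncard_le_ncard ?_ (hfin _)
          intro s hs
          rcases E.domS_cons φ c Y hs with rfl | h
          · exact absurd hs.2 hd
          · exact h
        · intro q hq
          obtain ⟨Z1, Z2, rfl, h⟩ := h2 q hq
          exact ⟨c :: Z1, Z2, by simp, by simpa using h⟩
        · intro q hq hqU
          exfalso
          refine key U q hqU ?_ (h4 q hq)
          obtain ⟨Z1, Z2, _, rfl⟩ := h2 q hq
          exact E.pstate_mono φ _ _

theorem tight_core [Fintype A] (hw : ∀ a, 0 < w a) (X Y : List A) (b : A)
    (hd : E.domCountP φ X + E.domCountS φ Y = E.Dmax φ + 1)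
    (hb : b ∉ E.stateLoopP φ (E.pstate φ X))
    (hC : X ++ [b] ++ Y ∈ E.Cset φ) : False := by
  obtain ⟨Z, hZ, T, h1, h2, h3, -⟩ := E.pumped φ hw Y _ hC
  have hCZ : X ++ [b] ++ Z ∈ E.Cset φ := by
    rw [append_mem_iff, hZ, ← append_mem_iff]; exact hC
  have hle := E.domCountP_le_Dmax φ hCZ
  have hfin : ∀ W, (E.domP φ W).Finite := fun W =>
    (states_finite φ).subset (E.domP_subset φ W)
  have hdisj : Disjoint (E.domP φ X) (T : Set (Fin f → ℕ)) := by
    rw [Set.disjoint_left]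
    rintro q ⟨⟨j, _, hj⟩, _⟩ hqT
    obtain ⟨Z1, Z2, _, hq⟩ := h2 q hqT
    apply hb
    rw [mem_loopP_iff]
    refine _root_.le_antisymm ?_ (E.pstate_mono φ _ _)
    calc E.pstate φ (X ++ [b]) ≤ q := hq ▸ E.pstate_mono φ _ _
      _ = E.pstate φ (X.take j) := hj.symm
      _ ≤ E.pstate φ (X.take j ++ X.drop j) := E.pstate_mono φ _ _
      _ = E.pstate φ X := by rw [List.take_append_drop]
  have hsub : E.domP φ X ∪ (T : Set (Fin f → ℕ)) ⊆ E.domP φ (X ++ [b] ++ Z) := by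
    rintro q (⟨⟨j, hj, hq⟩, hg⟩ | hq)
    · refine ⟨⟨j, by simp; omega, ?_⟩, hg⟩
      rw [List.append_assoc, List.take_append_of_le_length hj, hq]
    · obtain ⟨Z1, Z2, rfl, h⟩ := h2 q hq
      refine ⟨⟨(X ++ [b] ++ Z1).length, by simp, ?_⟩, h3 q hq⟩
      rw [← List.append_assoc, List.take_left, h]
  have hcard := Set.ncard_le_ncard hsub (hfin _)
  rw [Set.ncard_union_eq hdisj (hfin _) T.finite_toSet, Set.ncard_coe_finset] at hcard
  have e1 : E.domCountP φ X = (E.domP φ X).ncard := rfl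
  have e2 : E.domCountP φ (X ++ [b] ++ Z) = (E.domP φ (X ++ [b] ++ Z)).ncard := rfl
  omega

end EmbeddingOrder

/-- **Lemma `lem-tight`.**  Let `X` be a word with prefix state `p` and `d_X` dominant
loop blocks in its prefix decomposition, and `Y` a word with suffix state `s` and `d_Y`
dominant loop blocks in its suffix decomposition.  Suppose that `p` and `s` are
compatible, that `d_X + d_Y = D + 1`, that `L_p = coL_s`, and that the state `p` (and
therefore also `s`) is dominant.  Then `p` and `s` match. -/
theorem matches_of_tight {A : Type*} [Fintype A] {w : A → ℕ}
    (E : EmbeddingOrder A w) {f : ℕ} (φ : Fin f → List A)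
    (hw : ∀ a, 0 < w a)
    (one : A) (hone : w one = 1) (hone_le : ∀ a : A, E.le [one] [a])
    (hf : 0 < f) (hφne : ∀ i, φ i ≠ [])
    (hφmin : ∀ i ψ, E.le ψ (φ i) → ψ ≠ φ i → ψ ∈ E.Cset φ)
    (hunb : ¬ ∃ M : ℕ, ∀ n : ℕ,
      Set.ncard {W : List A | W ∈ E.Cset φ ∧ EmbeddingOrder.wt w W = n} ≤ M)
    (X Y : List A)
    (hcompat : ¬ POverlap φ (E.pstate φ X) (E.sstate φ Y))
    (hd : E.domCountP φ X + E.domCountS φ Y = E.Dmax φ + 1)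
    (hL : E.stateLoopP φ (E.pstate φ X) = E.stateLoopS φ (E.sstate φ Y))
    (hdom : growthOf w (E.stateLoopP φ (E.pstate φ X)) = E.gammaC φ) :
    E.Matches φ (E.pstate φ X) (E.sstate φ Y) := by
  refine ⟨hcompat, ?_, ?_⟩
  · rintro p' ⟨hne, b, hb⟩
    by_contra hov
    refine E.tight_core φ hw X Y b hd (fun h => hne ?_) ?_
    · exact (h X rfl).symm.trans (hb X rfl)
    · rw [append_mem_iff, hb X rfl]; exact hov
  · rintro s' ⟨hne, b, hb⟩
    by_contra hov
    refine E.tight_core φ hw X Y b hd (fun h => hne ?_) ?_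
    · rw [hL] at h
      exact (h Y rfl).symm.trans (hb Y rfl)
    · rw [List.append_assoc, append_mem_iff, List.singleton_append, hb Y rfl]; exact hov
end

section
/- Let C be an unbounded polynomial class. Let W ∈ C_n be a word with k dominant loop blocks in its prefix decomposition, and suppose that all these loop blocks are large. Let Ŵ ∈ C be a word that contains W. Then Ŵ has at least k dominant loop blocks in its prefix decomposition. Moreover, if Ŵ has exactly k dominant loop blocks in its prefix decomposition, then in every embedding of W into Ŵ, for any dominant loop block B_i of W, all the central symbols of B_i are mapped to loop symbols of Ŵ. Analogous properties hold for suffix decompositions. -/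
open Filter Asymptotics
open scoped Classical

namespace EmbeddingOrder

variable {A : Type*} {w : A → ℕ} (E : EmbeddingOrder A w) {f : ℕ} (φ : Fin f → List A)

/-- The length of the loop block of the prefix state `q` in `W`: the number of
positions of `W` that are loop symbols at state `q`. -/
noncomputable def blockLenP (W : List A) (q : Fin f → ℕ) : ℕ :=
  Set.ncard {i : ℕ | i < W.length ∧ E.pstate φ (W.take i) = q ∧
    E.pstate φ (W.take (i + 1)) = q}

/-- The length of the loop block of the suffix state `q` in `W`. -/
noncomputable def blockLenS (W : List A) (q : Fin f → ℕ) : ℕ :=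
  Set.ncard {i : ℕ | i < W.length ∧ E.sstate φ (W.drop (i + 1)) = q ∧
    E.sstate φ (W.drop i) = q}

/-- Every dominant loop block of the prefix decomposition of `W` is *large*:
it has length at least `2KQ + 1`. -/
def AllDomLargeP (K Q : ℕ) (W : List A) : Prop :=
  ∀ q : Fin f → ℕ, (∃ j ≤ W.length, E.pstate φ (W.take j) = q) →
    growthOf w (E.stateLoopP φ q) = E.gammaC φ → 2 * K * Q + 1 ≤ E.blockLenP φ W q

/-- Every dominant loop block of the suffix decomposition of `W` is *large*. -/
def AllDomLargeS (K Q : ℕ) (W : List A) : Prop :=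
  ∀ q : Fin f → ℕ, (∃ j ≤ W.length, E.sstate φ (W.drop j) = q) →
    growthOf w (E.stateLoopS φ q) = E.gammaC φ → 2 * K * Q + 1 ≤ E.blockLenS φ W q

/-- The number `|P|` of prefix states of words of `C`. -/
noncomputable def Pcard : ℕ :=
  Set.ncard {p : Fin f → ℕ | ∃ X ∈ E.Cset φ, E.pstate φ X = p}

/-- The number `|S|` of suffix states of words of `C`. -/
noncomputable def Scard : ℕ :=
  Set.ncard {s : Fin f → ℕ | ∃ Y ∈ E.Cset φ, E.sstate φ Y = s}

/-- The constant `Q = 3(|P| + |S|)`. -/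
noncomputable def Qconst : ℕ := 3 * (E.Pcard φ + E.Scard φ)

/-- The largest weight `K` of a letter of the alphabet. -/
noncomputable def Kmax (A : Type*) [Fintype A] (w : A → ℕ) : ℕ := Finset.univ.sup w

end EmbeddingOrder

namespace EmbeddingOrder

variable {A : Type*} {w : A → ℕ} (E : EmbeddingOrder A w) {f : ℕ} (φ : Fin f → List A)

/-- Position `q` of `W` is a *central symbol* of its (prefix) loop block: it is a loop
position, and its loop block contains at least `KQ` letters before it and at least `KQ`
letters after it. -/
def CentralP (KQ : ℕ) (W : List A) (q : ℕ) : Prop :=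
  q < W.length ∧ E.pstate φ (W.take (q + 1)) = E.pstate φ (W.take q) ∧
    KQ ≤ Set.ncard {i : ℕ | i < q ∧ E.pstate φ (W.take i) = E.pstate φ (W.take q) ∧
      E.pstate φ (W.take (i + 1)) = E.pstate φ (W.take q)} ∧
    KQ ≤ Set.ncard {i : ℕ | q < i ∧ i < W.length ∧
      E.pstate φ (W.take i) = E.pstate φ (W.take q) ∧
      E.pstate φ (W.take (i + 1)) = E.pstate φ (W.take q)}

/-- Position `q` of `W` is a *central symbol* of its suffix loop block. -/
def CentralS (KQ : ℕ) (W : List A) (q : ℕ) : Prop :=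
  q < W.length ∧ E.sstate φ (W.drop q) = E.sstate φ (W.drop (q + 1)) ∧
    KQ ≤ Set.ncard {i : ℕ | i < q ∧ E.sstate φ (W.drop i) = E.sstate φ (W.drop (q + 1)) ∧
      E.sstate φ (W.drop (i + 1)) = E.sstate φ (W.drop (q + 1))} ∧
    KQ ≤ Set.ncard {i : ℕ | q < i ∧ i < W.length ∧
      E.sstate φ (W.drop i) = E.sstate φ (W.drop (q + 1)) ∧
      E.sstate φ (W.drop (i + 1)) = E.sstate φ (W.drop (q + 1))}

/-- In an embedding of `W` into `V` witnessed by the factorisation `Ws` of `W`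
(`Ws.flatten = W`, `Ws.length = V.length`, `Ws i ≤ [V i]`), the letter of `W` at
position `q` is mapped to the letter of `V` at position `r`. -/
def MapsTo (Ws : List (List A)) (q r : ℕ) : Prop :=
  ((Ws.take r).flatten).length ≤ q ∧ q < ((Ws.take (r + 1)).flatten).length

end EmbeddingOrder

open EmbeddingOrder

namespace DomEmbed

/-- Combinatorial core, symmetric in prefix and suffix readings. -/
theorem core {S : Type*} (n m K T Q : ℕ) (σ τ : ℕ → S) (D : S → Prop)
    (aOne bOne : ℕ → Prop) (M : ℕ → ℕ → Prop)
    (hK : 0 < K) (hTQ : T < Q)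
    (hMex : ∀ q, q < n → ∃ r, M q r)
    (hMlt : ∀ q r, M q r → q < n ∧ r < m)
    (hMmono : ∀ q q' r r', q ≤ q' → M q r → M q' r' → r ≤ r')
    (hMfib : ∀ r, ∀ B : Finset ℕ, (∀ q ∈ B, M q r) → B.card ≤ K)
    (hMone : ∀ q r, M q r → bOne r → aOne q)
    (hτ : ∀ i j l, i ≤ l → l ≤ j → j ≤ m → τ i = τ j → τ l = τ i)
    (hV : ∀ i, i < m → τ i = τ (i + 1) → bOne i ∧ D (τ i))
    (hW : ∀ x y, x ≤ y → y < n → σ x = σ (x + 1) → σ y = σ (y + 1) →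
      (∀ i, x ≤ i → i ≤ y → aOne i) → σ x = σ y)
    (hT : ((Finset.range m).filter (fun i => τ i ≠ τ (i + 1))).card ≤ T)
    (hlarge : ∀ p, (∃ j ≤ n, σ j = p) → D p →
      2 * K * Q + 1 ≤ Set.ncard {i : ℕ | i < n ∧ σ i = p ∧ σ (i + 1) = p}) :
    Set.ncard {p | (∃ j ≤ n, σ j = p) ∧ D p} ≤ Set.ncard {p | (∃ j ≤ m, τ j = p) ∧ D p} ∧
    (Set.ncard {p | (∃ j ≤ m, τ j = p) ∧ D p} = Set.ncard {p | (∃ j ≤ n, σ j = p) ∧ D p} →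
      ∀ q r, q < n → σ (q + 1) = σ q →
      K * Q ≤ Set.ncard {i : ℕ | i < q ∧ σ i = σ q ∧ σ (i + 1) = σ q} →
      K * Q ≤ Set.ncard {i : ℕ | q < i ∧ i < n ∧ σ i = σ q ∧ σ (i + 1) = σ q} →
      D (σ q) → M q r → τ (r + 1) = τ r) := by
  have hKTQ : K * T < K * Q := Nat.mul_lt_mul_of_pos_left hTQ hK
  -- pigeonhole
  have pig : ∀ B : Set ℕ, (∀ i ∈ B, i < n) → K * Q ≤ B.ncard →
      ∃ i ∈ B, ∃ r, M i r ∧ τ r = τ (r + 1) := by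
    intro B hB hc
    by_contra hcon
    push Not at hcon
    have hfin : B.Finite := (Set.finite_lt_nat n).subset hB
    have hex : ∀ i, ∃ r, i < n → M i r := by
      intro i
      by_cases h : i < n
      · obtain ⟨r, hr⟩ := hMex i h
        exact ⟨r, fun _ => hr⟩
      · exact ⟨0, fun h' => absurd h' h⟩
    choose μ hμ using hex
    rw [Set.ncard_eq_toFinset_card B hfin] at hc
    have h1 := Finset.card_le_mul_card_image_of_maps_to (f := μ) (s := hfin.toFinset)
      (t := (Finset.range m).filter (fun i => τ i ≠ τ (i + 1))) (by
        intro i hi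
        have hi' : i ∈ B := by simpa using hi
        have hM := hμ i (hB i hi')
        simp only [Finset.coe_filter, Finset.mem_filter, Finset.mem_range]
        exact ⟨(hMlt _ _ hM).2, hcon i hi' _ hM⟩) K (by
        intro r _
        apply hMfib r
        intro q hq
        simp only [Finset.mem_filter, Set.Finite.mem_toFinset] at hq
        rw [← hq.2]
        exact hμ q (hB q hq.1))
    have h2 := Nat.mul_le_mul_left K hT
    omega
  -- injectivity
  have inj0 : ∀ x y r s, x ≤ y → M x r → M y s → σ x = σ (x + 1) → σ y = σ (y + 1) →
      τ r = τ (r + 1) → τ s = τ (s + 1) → τ r = τ s → σ x = σ y := by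
    intro x y r s hxy hx hy hsx hsy hr hs hrs
    refine hW x y hxy (hMlt _ _ hy).1 hsx hsy ?_
    intro i hxi hiy
    obtain ⟨t, ht⟩ := hMex i (lt_of_le_of_lt hiy (hMlt _ _ hy).1)
    have h1 := hMmono _ _ _ _ hxi hx ht
    have h2 := hMmono _ _ _ _ hiy ht hy
    have hsm := (hMlt _ _ hy).2
    refine hMone _ _ ht (hV t (hMlt _ _ ht).2 ?_).1
    rcases Nat.lt_or_ge t s with h | h
    · rw [hτ r s t h1 h2 hsm.le hrs, hτ r s (t + 1) (by omega) h hsm.le hrs]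
    · have : t = s := le_antisymm h2 h
      rw [this]; exact hs
  have inj : ∀ x y r s, M x r → M y s → σ x = σ (x + 1) → σ y = σ (y + 1) →
      τ r = τ (r + 1) → τ s = τ (s + 1) → τ r = τ s → σ x = σ y := by
    intro x y r s hx hy hsx hsy hr hs hrs
    rcases le_total x y with h | h
    · exact inj0 x y r s h hx hy hsx hsy hr hs hrs
    · exact (inj0 y x s r h hy hx hsy hsx hs hr hrs.symm).symm
  have hfinV : {p | (∃ j ≤ m, τ j = p) ∧ D p}.Finite := by
    apply ((Set.finite_le_nat m).image τ).subset
    rintro p ⟨⟨j, hj, rfl⟩, _⟩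
    exact ⟨j, hj, rfl⟩
  have hfinW : {p | (∃ j ≤ n, σ j = p) ∧ D p}.Finite := by
    apply ((Set.finite_le_nat n).image σ).subset
    rintro p ⟨⟨j, hj, rfl⟩, _⟩
    exact ⟨j, hj, rfl⟩
  -- choice of a witness in each dominant block
  have hg : ∀ p, ∃ g : S, ((∃ j ≤ n, σ j = p) ∧ D p) →
      ∃ x r, M x r ∧ σ x = p ∧ σ (x + 1) = p ∧ τ r = τ (r + 1) ∧ τ r = g := by
    intro p
    by_cases hp : (∃ j ≤ n, σ j = p) ∧ D p
    · have h1 := hlarge p hp.1 hp.2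
      obtain ⟨x, hx, r, hr, hl⟩ := pig {i : ℕ | i < n ∧ σ i = p ∧ σ (i + 1) = p}
        (fun i hi => hi.1) (by nlinarith [h1])
      exact ⟨τ r, fun _ => ⟨x, r, hr, hx.2.1, hx.2.2, hl, rfl⟩⟩
    · exact ⟨p, fun h => absurd h hp⟩
  choose g hg using hg
  have ginj : Set.InjOn g {p | (∃ j ≤ n, σ j = p) ∧ D p} := by
    intro p hp p' hp' h
    obtain ⟨x, r, h1, h2, h3, h4, h5⟩ := hg p hp
    obtain ⟨x', r', h1', h2', h3', h4', h5'⟩ := hg p' hp'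
    have := inj x x' r r' h1 h1' (by rw [h2, h3]) (by rw [h2', h3']) h4 h4' (by rw [h5, h5', h])
    rw [← h2, ← h2', this]
  have gmaps : ∀ p ∈ {p | (∃ j ≤ n, σ j = p) ∧ D p}, g p ∈ {p | (∃ j ≤ m, τ j = p) ∧ D p} := by
    intro p hp
    obtain ⟨x, r, h1, h2, h3, h4, h5⟩ := hg p hp
    have hr := (hMlt _ _ h1).2
    exact ⟨⟨r, hr.le, h5⟩, h5 ▸ (hV r hr h4).2⟩
  refine ⟨Set.ncard_le_ncard_of_injOn g gmaps ginj hfinV, ?_⟩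
  intro hcard q r hq hloop hb ha hD hM
  by_contra hne
  have hgsurj : g '' {p | (∃ j ≤ n, σ j = p) ∧ D p} = {p | (∃ j ≤ m, τ j = p) ∧ D p} := by
    apply Set.eq_of_subset_of_ncard_le _ _ hfinV
    · rintro _ ⟨p, hp, rfl⟩
      exact gmaps p hp
    · rw [Set.ncard_image_of_injOn ginj, hcard]
  obtain ⟨x, hx, s, hs, hsl⟩ := pig _ (fun i hi => lt_trans hi.1 hq) hb
  obtain ⟨y, hy, t, ht, htl⟩ := pig _ (fun i hi => hi.2.1) ha
  have hsr := hMmono _ _ _ _ hx.1.le hs hM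
  have hrt := hMmono _ _ _ _ hy.1.le hM ht
  have hsr' : s ≠ r := by rintro rfl; exact hne hsl.symm
  have hrt' : r ≠ t := by rintro rfl; exact hne htl.symm
  have htm := (hMlt _ _ ht).2
  have hst : τ s ≠ τ t := by
    intro h
    apply hne
    rw [hτ s t r hsr hrt htm.le h, hτ s t (r + 1) (by omega) (by omega) htm.le h]
  have key : ∀ x s, M x s → σ x = σ q → σ (x + 1) = σ q → τ s = τ (s + 1) → τ s = g (σ q) := by
    intro x s hs hx1 hx2 hsl
    have hsm := (hMlt _ _ hs).2
    have hmem : τ s ∈ {p | (∃ j ≤ m, τ j = p) ∧ D p} := ⟨⟨s, hsm.le, rfl⟩, (hV s hsm hsl).2⟩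
    rw [← hgsurj] at hmem
    obtain ⟨p, hp, hgp⟩ := hmem
    obtain ⟨x', r', h1', h2', h3', h4', h5'⟩ := hg p hp
    have := inj x x' s r' hs h1' (by rw [hx1, hx2]) (by rw [h2', h3']) hsl h4' (by rw [h5', hgp])
    rw [← hgp, ← hx1, this, h2']
  exact hst ((key x s hs hx.2.1 hx.2.2 hsl).trans (key y t ht hy.2.2.1 hy.2.2.2 htl).symm)

section emb
variable {A : Type*} {w : A → ℕ} (E : EmbeddingOrder A w) {f : ℕ} (φ : Fin f → List A)

theorem le_append {U1 U2 V1 V2 : List A} (h1 : E.le U1 V1) (h2 : E.le U2 V2) :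
    E.le (U1 ++ U2) (V1 ++ V2) := by
  rw [E.le_iff_factor] at h1 h2 ⊢
  obtain ⟨W1, hl1, hf1, hz1⟩ := h1
  obtain ⟨W2, hl2, hf2, hz2⟩ := h2
  refine ⟨W1 ++ W2, by simp [hl1, hl2], by simp [hf1, hf2], ?_⟩
  rw [List.zip_append hl1]
  intro q hq
  rcases List.mem_append.1 hq with h | h
  · exact hz1 q h
  · exact hz2 q h

theorem le_append_split {W V1 V2 : List A} (h : E.le W (V1 ++ V2)) :
    ∃ U T, W = U ++ T ∧ E.le U V1 ∧ E.le T V2 := by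
  rw [E.le_iff_factor] at h
  obtain ⟨Ws, hl, hf, hz⟩ := h
  rw [List.length_append] at hl
  have hsplit : Ws = Ws.take V1.length ++ Ws.drop V1.length := (List.take_append_drop _ _).symm
  have hl1 : (Ws.take V1.length).length = V1.length := by simp [hl]
  have hl2 : (Ws.drop V1.length).length = V2.length := by simp [hl]
  rw [hsplit, List.zip_append hl1] at hz
  refine ⟨(Ws.take V1.length).flatten, (Ws.drop V1.length).flatten, ?_, ?_, ?_⟩
  · rw [← List.flatten_append, List.take_append_drop, hf]
  · rw [E.le_iff_factor]
    exact ⟨_, hl1, rfl, fun q hq => hz q (List.mem_append_left _ hq)⟩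
  · rw [E.le_iff_factor]
    exact ⟨_, hl2, rfl, fun q hq => hz q (List.mem_append_right _ hq)⟩

theorem le_app_left (U T : List A) : E.le U (U ++ T) := by
  simpa using le_append E (E.le_refl U) (E.nil_le T)

theorem le_app_right (U T : List A) : E.le T (U ++ T) := by
  simpa using le_append E (E.nil_le U) (E.le_refl T)

theorem le_of_prefix {U V : List A} (h : U <+: V) : E.le U V := by
  obtain ⟨T, rfl⟩ := h
  exact le_app_left E U T

theorem le_of_suffix {U V : List A} (h : U <:+ V) : E.le U V := by
  obtain ⟨T, rfl⟩ := h
  exact le_app_right E T U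

theorem Cset_down {U V : List A} (hV : V ∈ E.Cset φ) (h : E.le U V) : U ∈ E.Cset φ :=
  fun i hi => hV i (E.le_trans hi h)

theorem length_le_wt (hw : ∀ a, 0 < w a) (U : List A) : U.length ≤ (U.map w).sum := by
  induction U with
  | nil => simp
  | cons a U ih =>
    have := hw a
    simp only [List.length_cons, List.map_cons, List.sum_cons]
    omega

theorem wt_le {U V : List A} (h : E.le U V) : (U.map w).sum ≤ (V.map w).sum := by
  by_cases he : U = V
  · rw [he]
  · exact (E.weight_lt h he).le

theorem le_one (hw : ∀ a, 0 < w a) {one : A} (hone : w one = 1) {U : List A}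
    (h : E.le U [one]) : U = [] ∨ U = [one] := by
  by_cases he : U = [one]
  · exact Or.inr he
  · left
    have h1 := E.weight_lt h he
    have h2 := length_le_wt hw U
    simp [hone] at h1
    exact List.length_eq_zero_iff.1 (by simp only [h1] at h2; omega)

/-! prefix states -/

theorem pbdd (W : List A) (i : Fin f) :
    BddAbove {p | p ≤ (φ i).length ∧ E.le ((φ i).take p) W} :=
  ⟨(φ i).length, fun _ h => h.1⟩

theorem pmem (W : List A) (i : Fin f) :
    E.pstate φ W i ≤ (φ i).length ∧ E.le ((φ i).take (E.pstate φ W i)) W :=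
  Nat.sSup_mem (s := {p | p ≤ (φ i).length ∧ E.le ((φ i).take p) W})
    ⟨0, by simpa using E.nil_le W⟩ (pbdd E φ W i)

theorem le_pstate {W : List A} {i : Fin f} {p : ℕ} (h1 : p ≤ (φ i).length)
    (h2 : E.le ((φ i).take p) W) : p ≤ E.pstate φ W i :=
  le_csSup (pbdd E φ W i) ⟨h1, h2⟩

theorem pstate_mono {U V : List A} (h : E.le U V) : E.pstate φ U ≤ E.pstate φ V := fun i =>
  le_pstate E φ (pmem E φ U i).1 (E.le_trans (pmem E φ U i).2 h)

theorem ptransfer_le {X Y : List A} (h : E.pstate φ X = E.pstate φ Y) (a : A) :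
    E.pstate φ (X ++ [a]) ≤ E.pstate φ (Y ++ [a]) := by
  intro i
  obtain ⟨h1, h2⟩ := pmem E φ (X ++ [a]) i
  refine le_pstate E φ h1 ?_
  obtain ⟨U, T, hUT, hU, hT⟩ := le_append_split E h2
  rw [hUT]
  refine le_append E ?_ hT
  have hpre : U <+: φ i := (List.prefix_append U T).trans (hUT ▸ List.take_prefix _ _)
  have hUe : U = (φ i).take U.length := List.prefix_iff_eq_take.1 hpre
  have hlen : U.length ≤ E.pstate φ Y i := by
    rw [← h]
    exact le_pstate E φ hpre.length_le (hUe ▸ hU)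
  refine E.le_trans (le_of_prefix E ?_) (pmem E φ Y i).2
  rw [hUe]
  exact List.take_prefix_take_left hlen

theorem ptransfer {X Y : List A} (h : E.pstate φ X = E.pstate φ Y) (a : A) :
    E.pstate φ (X ++ [a]) = E.pstate φ (Y ++ [a]) :=
  le_antisymm (ptransfer_le E φ h a) (ptransfer_le E φ h.symm a)

theorem mem_loopP {X : List A} {a : A} (h : E.pstate φ (X ++ [a]) = E.pstate φ X) :
    a ∈ E.stateLoopP φ (E.pstate φ X) := fun Y hY => by
  rw [ptransfer E φ hY, h]

theorem loopP_down {X : List A} {a b : A} (hab : E.le [b] [a])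
    (h : a ∈ E.stateLoopP φ (E.pstate φ X)) : b ∈ E.stateLoopP φ (E.pstate φ X) := by
  apply mem_loopP
  apply _root_.le_antisymm
  · rw [← h X rfl]
    exact pstate_mono E φ (le_append E (E.le_refl X) hab)
  · exact pstate_mono E φ (le_app_left E _ _)

/-! suffix states -/

theorem sbdd (W : List A) (i : Fin f) :
    BddAbove {p | p ≤ (φ i).length ∧ E.le ((φ i).drop ((φ i).length - p)) W} :=
  ⟨(φ i).length, fun _ h => h.1⟩

theorem smem (W : List A) (i : Fin f) :
    E.sstate φ W i ≤ (φ i).length ∧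
      E.le ((φ i).drop ((φ i).length - E.sstate φ W i)) W :=
  Nat.sSup_mem (s := {p | p ≤ (φ i).length ∧ E.le ((φ i).drop ((φ i).length - p)) W})
    ⟨0, by simpa using E.nil_le W⟩ (sbdd E φ W i)

theorem le_sstate {W : List A} {i : Fin f} {p : ℕ} (h1 : p ≤ (φ i).length)
    (h2 : E.le ((φ i).drop ((φ i).length - p)) W) : p ≤ E.sstate φ W i :=
  le_csSup (sbdd E φ W i) ⟨h1, h2⟩

theorem sstate_mono {U V : List A} (h : E.le U V) : E.sstate φ U ≤ E.sstate φ V := fun i =>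
  le_sstate E φ (smem E φ U i).1 (E.le_trans (smem E φ U i).2 h)

theorem stransfer_le {X Y : List A} (h : E.sstate φ X = E.sstate φ Y) (a : A) :
    E.sstate φ (a :: X) ≤ E.sstate φ (a :: Y) := by
  intro i
  obtain ⟨h1, h2⟩ := smem E φ (a :: X) i
  refine le_sstate E φ h1 ?_
  obtain ⟨U, T, hUT, hU, hT⟩ := le_append_split E (V1 := [a]) (V2 := X) h2
  rw [hUT]
  refine le_append E (V1 := [a]) hU ?_
  have hsuf : T <:+ φ i := (List.suffix_append U T).trans (hUT ▸ List.drop_suffix _ _)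
  have hTe : T = (φ i).drop ((φ i).length - T.length) := List.suffix_iff_eq_drop.1 hsuf
  have hlen : T.length ≤ E.sstate φ Y i := by
    rw [← h]
    exact le_sstate E φ hsuf.length_le (hTe ▸ hT)
  refine E.le_trans (le_of_suffix E ?_) (smem E φ Y i).2
  rw [hTe]
  exact List.drop_suffix_drop_left _ (by omega)

theorem stransfer {X Y : List A} (h : E.sstate φ X = E.sstate φ Y) (a : A) :
    E.sstate φ (a :: X) = E.sstate φ (a :: Y) :=
  le_antisymm (stransfer_le E φ h a) (stransfer_le E φ h.symm a)

theorem mem_loopS {X : List A} {a : A} (h : E.sstate φ (a :: X) = E.sstate φ X) :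
    a ∈ E.stateLoopS φ (E.sstate φ X) := fun Y hY => by
  rw [stransfer E φ hY, h]

theorem loopS_down {X : List A} {a b : A} (hab : E.le [b] [a])
    (h : a ∈ E.stateLoopS φ (E.sstate φ X)) : b ∈ E.stateLoopS φ (E.sstate φ X) := by
  apply mem_loopS
  apply _root_.le_antisymm
  · rw [← h X rfl]
    exact sstate_mono E φ (le_append E (U1 := [b]) (V1 := [a]) hab (E.le_refl X))
  · exact sstate_mono E φ (le_app_right E [b] X)

/-! growth rates -/

theorem growth_singleton (a : A) (ha : 0 < w a) : growthOf w ({a} : Set A) = 1 := by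
  have hset : {x : ℝ | 0 ≤ x ∧ ∑' b : ({a} : Set A), x ^ w (b : A) ≤ 1} = Set.Icc 0 1 := by
    ext x
    simp only [Set.mem_setOf_eq, Set.mem_Icc]
    rw [tsum_fintype]
    simp only [Finset.univ_unique, Finset.sum_singleton, Set.default_coe_singleton]
    constructor
    · rintro ⟨h0, h1⟩
      exact ⟨h0, (pow_le_one_iff_of_nonneg h0 ha.ne').1 h1⟩
    · rintro ⟨h0, h1⟩
      exact ⟨h0, pow_le_one₀ h0 h1⟩
  unfold growthOf rhoOf
  rw [hset, csSup_Icc zero_le_one, inv_one]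

theorem growth_two [Fintype A] (hw : ∀ a, 0 < w a) (S : Set A) {a b : A} (ha : a ∈ S)
    (hb : b ∈ S) (hab : a ≠ b) : 1 < growthOf w S := by
  set X := {x : ℝ | 0 ≤ x ∧ ∑' c : S, x ^ w (c : A) ≤ 1} with hX
  have hXe : X = {x : ℝ | 0 ≤ x ∧ ∑ c : S, x ^ w (c : A) ≤ 1} := by
    rw [hX]; simp only [tsum_fintype]
  have hle : ∀ x ∈ X, x ^ w a + x ^ w b ≤ 1 := by
    intro x hx
    rw [hXe] at hx
    obtain ⟨h0, h1⟩ := hx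
    refine le_trans ?_ h1
    have hne : (⟨a, ha⟩ : S) ≠ ⟨b, hb⟩ := fun h => hab (congrArg Subtype.val h)
    rw [← Finset.sum_pair (f := fun c : S => x ^ w (c : A)) hne]
    exact Finset.sum_le_sum_of_subset_of_nonneg (Finset.subset_univ _)
      (fun _ _ _ => pow_nonneg h0 _)
  have hub : ∀ x ∈ X, x ≤ 1 := by
    intro x hx
    have h0 : 0 ≤ x := hx.1
    have h1 := hle x hx
    have h2 : x ^ w a ≤ 1 := by linarith [pow_nonneg h0 (w b)]
    exact (pow_le_one_iff_of_nonneg h0 (hw a).ne').1 h2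
  have hclosed : IsClosed X := by
    rw [hXe]
    refine IsClosed.and (isClosed_le continuous_const continuous_id)
      (isClosed_le (by fun_prop) continuous_const)
  have hbdd : BddAbove X := ⟨1, hub⟩
  have hpos : (1 / ((Fintype.card S : ℝ) + 1)) ∈ X := by
    rw [hXe]
    have hc : (0 : ℝ) ≤ (Fintype.card S : ℝ) := Nat.cast_nonneg _
    have h0 : 0 < 1 / ((Fintype.card S : ℝ) + 1) := by positivity
    have h1 : 1 / ((Fintype.card S : ℝ) + 1) ≤ 1 := by
      rw [div_le_one (by positivity)]; linarith
    refine ⟨h0.le, ?_⟩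
    calc ∑ c : S, (1 / ((Fintype.card S : ℝ) + 1)) ^ w (c : A)
        ≤ ∑ c : S, (1 / ((Fintype.card S : ℝ) + 1)) :=
          Finset.sum_le_sum fun c _ => pow_le_of_le_one h0.le h1 (hw c).ne'
      _ = (Fintype.card S : ℝ) / ((Fintype.card S : ℝ) + 1) := by
          rw [Finset.sum_const, Finset.card_univ, nsmul_eq_mul]; ring
      _ ≤ 1 := by
          rw [div_le_one (by positivity)]; linarith
  have hmem : sSup X ∈ X := hclosed.csSup_mem ⟨_, hpos⟩ hbdd
  have hgt : 0 < sSup X := lt_of_lt_of_le (by positivity) (le_csSup hbdd hpos)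
  have hlt : sSup X < 1 := by
    refine lt_of_le_of_ne (hub _ hmem) ?_
    intro h
    have := hle _ hmem
    rw [h] at this
    norm_num at this
  exact (one_lt_inv₀ hgt).2 hlt

theorem growth_le_gamma [Fintype A] {X : List A} (hX : X ∈ E.Cset φ) :
    growthOf w (E.stateLoopP φ (E.pstate φ X)) ≤ E.gammaC φ := by
  apply le_csSup
  · apply Set.Finite.bddAbove
    apply (Set.finite_range (growthOf w)).subset
    rintro g ⟨X, _, rfl⟩
    exact ⟨_, rfl⟩
  · exact ⟨X, hX, rfl⟩

theorem loopP_unique [Fintype A] (hw : ∀ a, 0 < w a) (hpoly : E.gammaC φ = 1) {X : List A}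
    (hX : X ∈ E.Cset φ) {a b : A} (ha : a ∈ E.stateLoopP φ (E.pstate φ X))
    (hb : b ∈ E.stateLoopP φ (E.pstate φ X)) : a = b := by
  by_contra hab
  have h1 := growth_two hw _ ha hb hab
  have h2 := growth_le_gamma E φ hX
  linarith

/-- the word `(ba)^N` -/
def altWord (a b : A) : ℕ → List A
  | 0 => []
  | n + 1 => altWord a b n ++ [a] ++ [b]

theorem altWord_mem (a b : A) (n : ℕ) : ∀ c ∈ altWord a b n, c = a ∨ c = b := by
  induction n with
  | zero => simp [altWord]
  | succ n ih =>
    intro c hc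
    simp only [altWord, List.mem_append, List.mem_singleton] at hc
    rcases hc with (h | h) | h
    · exact ih c h
    · exact Or.inl h
    · exact Or.inr h

theorem no_two_free [Fintype A] (hw : ∀ a, 0 < w a) (hpoly : E.gammaC φ = 1) {a b : A}
    (h : ∀ U : List A, (∀ c ∈ U, c = a ∨ c = b) → U ∈ E.Cset φ) : a = b := by
  by_contra hab
  have hne : ∀ n, E.pstate φ (altWord a b n) ≠ E.pstate φ (altWord a b (n + 1)) := by
    intro n he
    have h1 : E.pstate φ (altWord a b n) ≤ E.pstate φ (altWord a b n ++ [a]) :=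
      pstate_mono E φ (le_app_left E _ _)
    have h2 : E.pstate φ (altWord a b n ++ [a]) ≤ E.pstate φ (altWord a b n ++ [a] ++ [b]) :=
      pstate_mono E φ (le_app_left E _ _)
    have he' : E.pstate φ (altWord a b n) = E.pstate φ (altWord a b n ++ [a] ++ [b]) := he
    have h3 : E.pstate φ (altWord a b n ++ [a]) = E.pstate φ (altWord a b n) :=
      le_antisymm (he' ▸ h2) h1
    have ha := mem_loopP E φ h3
    have hb : b ∈ E.stateLoopP φ (E.pstate φ (altWord a b n ++ [a])) :=
      mem_loopP E φ (he'.symm.trans h3.symm)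
    rw [h3] at hb
    exact hab (loopP_unique E φ hw hpoly (h _ (altWord_mem a b n)) ha hb)
  have hgrow : ∀ n, n ≤ ∑ i, E.pstate φ (altWord a b n) i := by
    intro n
    induction n with
    | zero => exact Nat.zero_le _
    | succ n ih =>
      have hle : E.pstate φ (altWord a b n) ≤ E.pstate φ (altWord a b (n + 1)) := by
        apply pstate_mono
        simp only [altWord, List.append_assoc]
        exact le_app_left E _ _
      obtain ⟨i, hi⟩ : ∃ i, E.pstate φ (altWord a b n) i < E.pstate φ (altWord a b (n + 1)) i := by
        by_contra hc
        push Not at hc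
        exact hne n (le_antisymm hle hc)
      have := Finset.sum_lt_sum (s := Finset.univ) (fun i _ => hle i) ⟨i, Finset.mem_univ i, hi⟩
      omega
  have h1 := hgrow (∑ i, (φ i).length + 1)
  have h2 : ∑ i, E.pstate φ (altWord a b (∑ i, (φ i).length + 1)) i ≤ ∑ i, (φ i).length :=
    Finset.sum_le_sum fun i _ => (pmem E φ _ i).1
  omega

theorem loopS_unique [Fintype A] (hw : ∀ a, 0 < w a) (hpoly : E.gammaC φ = 1) {X : List A}
    (hX : X ∈ E.Cset φ) {a b : A} (ha : a ∈ E.stateLoopS φ (E.sstate φ X))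
    (hb : b ∈ E.stateLoopS φ (E.sstate φ X)) : a = b := by
  apply no_two_free E φ hw hpoly
  intro U hU
  have hst : E.sstate φ (U ++ X) = E.sstate φ X := by
    induction U with
    | nil => rfl
    | cons c U ih =>
      have ih2 := ih (fun d hd => hU d (List.mem_cons_of_mem _ hd))
      rcases hU c List.mem_cons_self with hc | hc
      · rw [hc]; exact ha _ ih2
      · rw [hc]; exact hb _ ih2
  intro i hi
  have h1 : (φ i).length ≤ E.sstate φ (U ++ X) i :=
    le_sstate E φ le_rfl (by simpa using E.le_trans hi (le_app_left E U X))
  rw [hst] at h1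
  have h2 := (smem E φ X i).2
  rw [Nat.sub_eq_zero_of_le h1] at h2
  exact hX i h2

/-! the embedding relation -/

theorem len_take_mono (Ws : List (List A)) {r s : ℕ} (h : r ≤ s) :
    (Ws.take r).flatten.length ≤ (Ws.take s).flatten.length := by
  obtain ⟨T, hT⟩ := List.take_prefix_take_left (l := Ws) h
  rw [← hT, List.flatten_append, List.length_append]
  omega

theorem mapsTo_mono {Ws : List (List A)} {q q' r r' : ℕ} (hq : q ≤ q') (h : MapsTo Ws q r)
    (h' : MapsTo Ws q' r') : r ≤ r' := by
  by_contra hlt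
  have := len_take_mono Ws (show r' + 1 ≤ r by omega)
  have h1 := h.1
  have h2 := h'.2
  omega

theorem mapsTo_lt {Ws : List (List A)} {q r : ℕ} (h : MapsTo Ws q r) :
    q < Ws.flatten.length ∧ r < Ws.length := by
  constructor
  · refine lt_of_lt_of_le h.2 ?_
    have := len_take_mono Ws (show r + 1 ≤ max (r + 1) Ws.length from le_max_left _ _)
    rwa [List.take_of_length_le (le_max_right _ _)] at this
  · by_contra hr
    have h1 := h.1
    have h2 := h.2
    rw [List.take_of_length_le (by omega)] at h1 h2
    omega

theorem mapsTo_ex {Ws : List (List A)} {q : ℕ} (h : q < Ws.flatten.length) :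
    ∃ r, MapsTo Ws q r := by
  have hex : ∃ r, q < ((Ws.take (r + 1)).flatten).length :=
    ⟨Ws.length, by rwa [List.take_of_length_le (by omega)]⟩
  refine ⟨Nat.find hex, ?_, Nat.find_spec hex⟩
  rcases Nat.eq_zero_or_pos (Nat.find hex) with h0 | h0
  · rw [h0]; simp
  · have := Nat.find_min hex (show Nat.find hex - 1 < Nat.find hex by omega)
    rw [Nat.sub_add_cancel h0] at this
    omega

theorem take_succ_flatten (Ws : List (List A)) {r : ℕ} (hr : r < Ws.length) :
    (Ws.take (r + 1)).flatten = (Ws.take r).flatten ++ Ws[r] := by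
  rw [List.take_succ_eq_append_getElem hr, List.flatten_append, List.flatten_singleton]

theorem zip_get {Ws : List (List A)} {V : List A} (hz : ∀ x ∈ Ws.zip V, E.le x.1 [x.2])
    {r : ℕ} (hr : r < Ws.length) (hr' : r < V.length) : E.le Ws[r] [V[r]] := by
  have := hz ((Ws.zip V)[r]'(by simp; omega)) (List.getElem_mem _)
  simpa using this

theorem mapsTo_fib [Fintype A] (hw : ∀ a, 0 < w a) {Ws : List (List A)} {V : List A}
    (hl : Ws.length = V.length)
    (hz : ∀ x ∈ Ws.zip V, E.le x.1 [x.2]) (r : ℕ) (B : Finset ℕ)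
    (hB : ∀ q ∈ B, MapsTo Ws q r) : B.card ≤ Kmax A w := by
  rcases B.eq_empty_or_nonempty with rfl | ⟨q0, hq0⟩
  · simp
  have hr := (mapsTo_lt (hB q0 hq0)).2
  have hle := zip_get E hz hr (hl ▸ hr)
  have h1 := length_le_wt hw Ws[r]
  have h2 := wt_le E hle
  have h3 : w (V[r]'(hl ▸ hr)) ≤ Kmax A w := Finset.le_sup (Finset.mem_univ _)
  simp only [List.map_cons, List.map_nil, List.sum_cons, List.sum_nil] at h2
  have hsub : B ⊆ Finset.Ico ((Ws.take r).flatten).length ((Ws.take (r + 1)).flatten).length := by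
    intro q hq
    exact Finset.mem_Ico.2 (hB q hq)
  have := Finset.card_le_card hsub
  rw [Nat.card_Ico, take_succ_flatten Ws hr, List.length_append] at this
  omega

theorem mapsTo_one (hw : ∀ a, 0 < w a) {one : A} (hone : w one = 1) {Ws : List (List A)}
    {V : List A} (hl : Ws.length = V.length)
    (hz : ∀ x ∈ Ws.zip V, E.le x.1 [x.2]) {q r : ℕ} (h : MapsTo Ws q r)
    (hV : V[r]? = some one) : Ws.flatten[q]? = some one := by
  have hr := (mapsTo_lt h).2
  have hle := zip_get E hz hr (hl ▸ hr)
  have hVr : V[r]'(hl ▸ hr) = one := by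
    rw [List.getElem?_eq_getElem (hl ▸ hr)] at hV
    exact Option.some.inj hV
  rw [hVr] at hle
  have h1 := h.1
  have h2 := h.2
  have hflat : Ws.flatten = (Ws.take (r + 1)).flatten ++ (Ws.drop (r + 1)).flatten := by
    rw [← List.flatten_append, List.take_append_drop]
  rw [take_succ_flatten Ws hr] at h2 hflat
  rcases le_one E hw hone hle with h0 | h0
  · rw [h0] at h2
    simp only [List.append_nil] at h2
    omega
  · rw [h0] at h2 hflat
    simp only [List.length_append, List.length_singleton] at h2
    have hq : q = ((Ws.take r).flatten).length := by omega
    rw [hflat, hq]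
    simp

end emb

section final
variable {A : Type*} {w : A → ℕ} (E : EmbeddingOrder A w) {f : ℕ} (φ : Fin f → List A)

theorem Pfin : {p : Fin f → ℕ | ∃ X ∈ E.Cset φ, E.pstate φ X = p}.Finite := by
  apply (Set.finite_Iic (fun i => (φ i).length : Fin f → ℕ)).subset
  rintro p ⟨X, _, rfl⟩
  exact fun i => (pmem E φ X i).1

theorem Sfin : {p : Fin f → ℕ | ∃ X ∈ E.Cset φ, E.sstate φ X = p}.Finite := by
  apply (Set.finite_Iic (fun i => (φ i).length : Fin f → ℕ)).subset
  rintro p ⟨X, _, rfl⟩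
  exact fun i => (smem E φ X i).1

theorem trans_card {S : Type*} (m : ℕ) (τ : ℕ → S) (P : Set S) (hP : P.Finite)
    (hτ : ∀ i j l, i ≤ l → l ≤ j → j ≤ m → τ i = τ j → τ l = τ i)
    (hmem : ∀ i, i ≤ m → τ i ∈ P) :
    ((Finset.range m).filter (fun i => τ i ≠ τ (i + 1))).card ≤ P.ncard := by
  rw [← Set.ncard_coe_finset]
  have aux : ∀ i j, i < j → j < m → τ j ≠ τ (j + 1) → τ (i + 1) ≠ τ (j + 1) := by
    intro i j hij hj hne h
    exact hne ((hτ (i + 1) (j + 1) j hij (by omega) hj h).trans h)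
  apply Set.ncard_le_ncard_of_injOn (fun i => τ (i + 1)) _ _ hP
  · intro i hi
    simp only [Finset.coe_filter, Finset.mem_range, Set.mem_setOf_eq] at hi
    exact hmem _ hi.1
  · intro i hi j hj h
    simp only [Finset.coe_filter, Finset.mem_range, Set.mem_setOf_eq] at hi hj
    rcases lt_trichotomy i j with h' | h' | h'
    · exact absurd h (aux i j h' hj.1 hj.2)
    · exact h'
    · exact absurd h.symm (aux j i h' hi.1 hi.2)

theorem ptake_mono (W : List A) {i j : ℕ} (h : i ≤ j) :
    E.pstate φ (W.take i) ≤ E.pstate φ (W.take j) :=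
  pstate_mono E φ (le_of_prefix E (List.take_prefix_take_left h))

theorem sdrop_anti (W : List A) {i j : ℕ} (h : i ≤ j) :
    E.sstate φ (W.drop j) ≤ E.sstate φ (W.drop i) :=
  sstate_mono E φ (le_of_suffix E (List.drop_suffix_drop_left _ h))

variable [Fintype A]

theorem final_P (hw : ∀ a, 0 < w a)
    (one : A) (hone : w one = 1) (hone_le : ∀ a : A, E.le [one] [a])
    (hpoly : E.gammaC φ = 1) (W V : List A) (hV : V ∈ E.Cset φ)
    (hlarge : E.AllDomLargeP φ (Kmax A w) (E.Qconst φ) W)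
    (Ws : List (List A)) (hl : Ws.length = V.length) (hf : Ws.flatten = W)
    (hz : ∀ x ∈ Ws.zip V, E.le x.1 [x.2]) :
    E.domCountP φ W ≤ E.domCountP φ V ∧
      (E.domCountP φ V = E.domCountP φ W → ∀ q r : ℕ,
        E.CentralP φ (Kmax A w * E.Qconst φ) W q →
        growthOf w (E.stateLoopP φ (E.pstate φ (W.take q))) = E.gammaC φ →
        MapsTo Ws q r → E.pstate φ (V.take (r + 1)) = E.pstate φ (V.take r)) := by
  have hτ : ∀ i j l, i ≤ l → l ≤ j → j ≤ V.length →
      E.pstate φ (V.take i) = E.pstate φ (V.take j) →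
      E.pstate φ (V.take l) = E.pstate φ (V.take i) := by
    intro i j l h1 h2 _ h
    exact le_antisymm (h ▸ ptake_mono E φ V h2) (ptake_mono E φ V h1)
  have hloop : ∀ (U : List A) (i : ℕ) (hi : i < U.length),
      E.pstate φ (U.take i) = E.pstate φ (U.take (i + 1)) →
      U[i] ∈ E.stateLoopP φ (E.pstate φ (U.take i)) := by
    intro U i hi h
    apply mem_loopP
    rw [← List.take_succ_eq_append_getElem hi, h]
  have hVC : ∀ i, V.take i ∈ E.Cset φ := fun i =>
    Cset_down E φ hV (le_of_prefix E (List.take_prefix _ _))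
  have hPpos : 0 < E.Pcard φ := by
    apply (Set.ncard_pos (Pfin E φ)).2
    exact ⟨_, _, hV, rfl⟩
  have hK : 0 < Kmax A w :=
    lt_of_lt_of_le (hw one) (Finset.le_sup (f := w) (Finset.mem_univ one))
  have hc := core W.length V.length (Kmax A w) (E.Pcard φ) (E.Qconst φ)
    (fun i => E.pstate φ (W.take i)) (fun i => E.pstate φ (V.take i))
    (fun p => growthOf w (E.stateLoopP φ p) = E.gammaC φ)
    (fun i => W[i]? = some one) (fun i => V[i]? = some one) (MapsTo Ws)
    hK (by unfold Qconst; omega)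
    (fun q hq => mapsTo_ex (hf ▸ hq))
    (fun q r h => by rw [← hf, ← hl]; exact mapsTo_lt h)
    (fun q q' r r' h h1 h2 => mapsTo_mono h h1 h2)
    (mapsTo_fib E hw hl hz)
    (fun q r h h1 => by rw [← hf]; exact mapsTo_one E hw hone hl hz h h1)
    hτ
    (by
      intro i hi h
      have h1 := hloop V i hi h
      have h2 := loopP_down E φ (hone_le _) h1
      refine ⟨?_, ?_⟩
      · rw [List.getElem?_eq_getElem hi, loopP_unique E φ hw hpoly (hVC i) h1 h2]
      · have : E.stateLoopP φ (E.pstate φ (V.take i)) = {one} := by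
          apply Set.eq_singleton_iff_unique_mem.2
          exact ⟨h2, fun b hb => loopP_unique E φ hw hpoly (hVC i) hb h2⟩
        show growthOf w (E.stateLoopP φ (E.pstate φ (V.take i))) = _
        rw [this, growth_singleton one (hw one), hpoly])
    (by
      intro x y hxy hy hx _ hall
      have hxl : x < W.length := lt_of_le_of_lt hxy hy
      have h2 := loopP_down E φ (hone_le _) (hloop W x hxl hx)
      have : ∀ d, x + d ≤ y → E.pstate φ (W.take (x + d)) = E.pstate φ (W.take x) := by
        intro d
        induction d with
        | zero => intro _; rfl
        | succ d ih =>
          intro hd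
          have ih := ih (by omega)
          have hlt : x + d < W.length := by omega
          have hone' := hall (x + d) (by omega) (by omega)
          rw [List.getElem?_eq_getElem hlt] at hone'
          rw [← Nat.add_assoc, List.take_succ_eq_append_getElem hlt, Option.some.inj hone']
          exact h2 _ ih
      have h3 := this (y - x) (by omega)
      rw [Nat.add_sub_cancel' hxy] at h3
      exact h3.symm)
    (trans_card V.length _ _ (Pfin E φ) hτ (fun i _ => ⟨_, hVC i, rfl⟩))
    hlarge
  refine ⟨hc.1, ?_⟩
  intro he q r hcen hD hM
  exact hc.2 he q r hcen.1 hcen.2.1 hcen.2.2.1 hcen.2.2.2 hD hM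

theorem final_S (hw : ∀ a, 0 < w a)
    (one : A) (hone : w one = 1) (hone_le : ∀ a : A, E.le [one] [a])
    (hpoly : E.gammaC φ = 1) (W V : List A) (hV : V ∈ E.Cset φ)
    (hlarge : E.AllDomLargeS φ (Kmax A w) (E.Qconst φ) W)
    (Ws : List (List A)) (hl : Ws.length = V.length) (hf : Ws.flatten = W)
    (hz : ∀ x ∈ Ws.zip V, E.le x.1 [x.2]) :
    E.domCountS φ W ≤ E.domCountS φ V ∧
      (E.domCountS φ V = E.domCountS φ W → ∀ q r : ℕ,
        E.CentralS φ (Kmax A w * E.Qconst φ) W q →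
        growthOf w (E.stateLoopS φ (E.sstate φ (W.drop (q + 1)))) = E.gammaC φ →
        MapsTo Ws q r → E.sstate φ (V.drop r) = E.sstate φ (V.drop (r + 1))) := by
  have hτ : ∀ i j l, i ≤ l → l ≤ j → j ≤ V.length →
      E.sstate φ (V.drop i) = E.sstate φ (V.drop j) →
      E.sstate φ (V.drop l) = E.sstate φ (V.drop i) := by
    intro i j l h1 h2 _ h
    exact le_antisymm (sdrop_anti E φ V h1) (h ▸ sdrop_anti E φ V h2)
  have hloop : ∀ (U : List A) (i : ℕ) (hi : i < U.length),
      E.sstate φ (U.drop i) = E.sstate φ (U.drop (i + 1)) →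
      U[i] ∈ E.stateLoopS φ (E.sstate φ (U.drop (i + 1))) := by
    intro U i hi h
    apply mem_loopS
    rw [← List.drop_eq_getElem_cons hi, h]
  have hVC : ∀ i, V.drop i ∈ E.Cset φ := fun i =>
    Cset_down E φ hV (le_of_suffix E (List.drop_suffix _ _))
  have hSpos : 0 < E.Scard φ := by
    apply (Set.ncard_pos (Sfin E φ)).2
    exact ⟨_, _, hV, rfl⟩
  have hK : 0 < Kmax A w :=
    lt_of_lt_of_le (hw one) (Finset.le_sup (f := w) (Finset.mem_univ one))
  have hc := core W.length V.length (Kmax A w) (E.Scard φ) (E.Qconst φ)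
    (fun i => E.sstate φ (W.drop i)) (fun i => E.sstate φ (V.drop i))
    (fun p => growthOf w (E.stateLoopS φ p) = E.gammaC φ)
    (fun i => W[i]? = some one) (fun i => V[i]? = some one) (MapsTo Ws)
    hK (by unfold Qconst; omega)
    (fun q hq => mapsTo_ex (hf ▸ hq))
    (fun q r h => by rw [← hf, ← hl]; exact mapsTo_lt h)
    (fun q q' r r' h h1 h2 => mapsTo_mono h h1 h2)
    (mapsTo_fib E hw hl hz)
    (fun q r h h1 => by rw [← hf]; exact mapsTo_one E hw hone hl hz h h1)
    hτ
    (by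
      intro i hi h
      have h1 := hloop V i hi h
      have h2 := loopS_down E φ (hone_le _) h1
      refine ⟨?_, ?_⟩
      · rw [List.getElem?_eq_getElem hi, loopS_unique E φ hw hpoly (hVC (i + 1)) h1 h2]
      · have : E.stateLoopS φ (E.sstate φ (V.drop (i + 1))) = {one} := by
          apply Set.eq_singleton_iff_unique_mem.2
          exact ⟨h2, fun b hb => loopS_unique E φ hw hpoly (hVC (i + 1)) hb h2⟩
        show growthOf w (E.stateLoopS φ (E.sstate φ (V.drop i))) = _
        rw [show E.sstate φ (V.drop i) = _ from h, this, growth_singleton one (hw one), hpoly])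
    (by
      intro x y hxy hy _ hyl hall
      have h2 := loopS_down E φ (hone_le _) (hloop W y hy hyl)
      have : ∀ d, d ≤ y - x →
          E.sstate φ (W.drop (y - d)) = E.sstate φ (W.drop (y + 1)) := by
        intro d
        induction d with
        | zero => intro _; exact hyl
        | succ d ih =>
          intro hd
          have ih := ih (by omega)
          have hlt : y - (d + 1) < W.length := by omega
          have hone' := hall (y - (d + 1)) (by omega) (by omega)
          rw [List.getElem?_eq_getElem hlt] at hone'
          rw [List.drop_eq_getElem_cons hlt, Option.some.inj hone',
            show y - (d + 1) + 1 = y - d by omega]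
          exact h2 _ ih
      have h3 := this (y - x) le_rfl
      rw [show y - (y - x) = x by omega] at h3
      exact h3.trans hyl.symm)
    (trans_card V.length _ _ (Sfin E φ) hτ (fun i _ => ⟨_, hVC i, rfl⟩))
    (by
      intro p hp hD
      have := hlarge p hp hD
      refine le_trans this (le_of_eq ?_)
      unfold blockLenS
      congr 1
      ext i
      simp only [Set.mem_setOf_eq]
      tauto)
  refine ⟨hc.1, ?_⟩
  intro he q r hcen hD hM
  obtain ⟨hq, hlp, hb, ha⟩ := hcen
  rw [← hlp] at hb ha hD
  exact (hc.2 he q r hq hlp.symm hb ha hD hM).symm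

end final

end DomEmbed


/-- **Lemma `lem-dw`.**  Let `C` be an unbounded polynomial class (`γ = 1`, unbounded
growth).  Let `W ∈ C_n` have `k` dominant loop blocks in its prefix decomposition, all
of them large, and let `Ŵ ∈ C` contain `W`.  Then `Ŵ` has at least `k` dominant loop
blocks in its prefix decomposition; moreover if `Ŵ` has exactly `k` dominant loop
blocks, then in every embedding of `W` into `Ŵ`, for any dominant loop block of `W`,
all its central symbols are mapped to loop symbols of `Ŵ`.  Analogous properties hold
for suffix decompositions. -/
theorem dominant_blocks_embed {A : Type*} [Fintype A] {w : A → ℕ}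
    (E : EmbeddingOrder A w) {f : ℕ} (φ : Fin f → List A)
    (hw : ∀ a, 0 < w a)
    (one : A) (hone : w one = 1) (hone_le : ∀ a : A, E.le [one] [a])
    (hf : 0 < f) (hφne : ∀ i, φ i ≠ [])
    (hφmin : ∀ i ψ, E.le ψ (φ i) → ψ ≠ φ i → ψ ∈ E.Cset φ)
    (hunb : ¬ ∃ M : ℕ, ∀ n : ℕ,
      Set.ncard {W : List A | W ∈ E.Cset φ ∧ EmbeddingOrder.wt w W = n} ≤ M)
    (hpoly : E.gammaC φ = 1) :
    (∀ (W V : List A) (k : ℕ), W ∈ E.Cset φ → V ∈ E.Cset φ → E.le W V →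
      E.domCountP φ W = k → E.AllDomLargeP φ (Kmax A w) (E.Qconst φ) W →
      k ≤ E.domCountP φ V ∧
        (E.domCountP φ V = k →
          ∀ Ws : List (List A), Ws.length = V.length → Ws.flatten = W →
            (∀ x ∈ Ws.zip V, E.le x.1 [x.2]) →
          ∀ q r : ℕ, E.CentralP φ (Kmax A w * E.Qconst φ) W q →
            growthOf w (E.stateLoopP φ (E.pstate φ (W.take q))) = E.gammaC φ →
            MapsTo Ws q r →
            E.pstate φ (V.take (r + 1)) = E.pstate φ (V.take r))) ∧
    (∀ (W V : List A) (k : ℕ), W ∈ E.Cset φ → V ∈ E.Cset φ → E.le W V →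
      E.domCountS φ W = k → E.AllDomLargeS φ (Kmax A w) (E.Qconst φ) W →
      k ≤ E.domCountS φ V ∧
        (E.domCountS φ V = k →
          ∀ Ws : List (List A), Ws.length = V.length → Ws.flatten = W →
            (∀ x ∈ Ws.zip V, E.le x.1 [x.2]) →
          ∀ q r : ℕ, E.CentralS φ (Kmax A w * E.Qconst φ) W q →
            growthOf w (E.stateLoopS φ (E.sstate φ (W.drop (q + 1)))) = E.gammaC φ →
            MapsTo Ws q r →
            E.sstate φ (V.drop r) = E.sstate φ (V.drop (r + 1)))) := by
  constructor
  · intro W V k _ hV hle hk hlarge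
    subst hk
    refine ⟨?_, ?_⟩
    · obtain ⟨Ws, hl, hfl, hz⟩ := (E.le_iff_factor W V).1 hle
      exact (DomEmbed.final_P E φ hw one hone hone_le hpoly W V hV hlarge Ws hl hfl hz).1
    · intro he Ws hl hfl hz
      exact (DomEmbed.final_P E φ hw one hone hone_le hpoly W V hV hlarge Ws hl hfl hz).2 he
  · intro W V k _ hV hle hk hlarge
    subst hk
    refine ⟨?_, ?_⟩
    · obtain ⟨Ws, hl, hfl, hz⟩ := (E.le_iff_factor W V).1 hle
      exact (DomEmbed.final_S E φ hw one hone hone_le hpoly W V hV hlarge Ws hl hfl hz).1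
    · intro he Ws hl hfl hz
      exact (DomEmbed.final_S E φ hw one hone hone_le hpoly W V hV hlarge Ws hl hfl hz).2 he
end
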